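/- For every r ≥ 3 there exists m₀ such that for all m ≥ m₀, at least one of the pairs (m, ⌊C(m,r)/2⌋) and (m, ⌊C(m,r)/2⌋ − m − 1) is absolutely r-avoidable. -/

import Mathlib

open Finset
open scoped Classical

/-- `(n,e) →_r (m,f)`: every `r`-uniform hypergraph on `n` vertices with `e` edges
has an induced sub-hypergraph on `m` vertices with exactly `f` edges. -/
def PairArrows (r n e m f : ℕ) : Prop :=
  ∀ G : Finset (Finset (Fin n)), (∀ s ∈ G, s.card = r) → G.card = e →
    ∃ S : Finset (Fin n), S.card = m ∧ (G.filter (fun t => t ⊆ S)).card = f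

/-- The density `σ_r(m,f)`. -/
noncomputable def sigmaR (r m f : ℕ) : ℝ :=
  Filter.limsup
    (fun n : ℕ =>
      (((Finset.range (n.choose r + 1)).filter (fun e => PairArrows r n e m f)).card : ℝ) /
        (n.choose r : ℝ))
    Filter.atTop
/-- The pair `(m,f)` is absolutely `r`-avoidable. -/
def AbsolutelyAvoidable (r m f : ℕ) : Prop :=
  ∃ n₀ : ℕ, ∀ n > n₀, ∀ e ≤ n.choose r,
    ∃ G : Finset (Finset (Fin n)), (∀ s ∈ G, s.card = r) ∧ G.card = e ∧
      ¬ ∃ S : Finset (Fin n), S.card = m ∧ (G.filter (fun t => t ⊆ S)).card = f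

/-!
An `r`-uniform hypergraph that is the disjoint union of a clique and a hypergraph in which every `m`
vertices span at most `m` edges has only few possible edge counts on `m`-sets, namely those in the
windows `[C(x,r), C(x,r) + m]` with `x ≤ m`. A hypergraph with at most half of all edges can be
taken of this form with any prescribed number `e` of edges: take the largest clique with at most `e`
edges, which misses a positive proportion of the vertices, and place on these the remaining
`O(n^(r-1))` edges. This is possible because sparse hypergraphs with `C * n^(r-1)` edges exist for
every `C`, by the deletion method. Larger `e` are reached by complementation. So `(m, f)` is
avoidable unless `f` or `C(m,r) - f` lies in a window. If this happened both for `f = ⌊C(m,r)/2⌋`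
and for `f - m - 1`, there would be two different binomial coefficients `C(x,r)` within `O(m)` of
`C(m,r)/2`, where consecutive ones differ by at least a constant times `m^2`.
-/

open Filter Asymptotics

section DeletionMethod

variable {α : Type*}

/-- The probability that the random subset of `X` containing each element independently with
probability `p` is equal to `T ⊆ X`. -/
def bernoulliWeight (p : ℝ) (X T : Finset α) : ℝ :=
  p ^ #T * (1 - p) ^ (#X - #T)

lemma bernoulliWeight_nonneg {p : ℝ} (hp₀ : 0 ≤ p) (hp₁ : p ≤ 1) (X T : Finset α) :
    0 ≤ bernoulliWeight p X T :=
  mul_nonneg (pow_nonneg hp₀ _) (pow_nonneg (sub_nonneg.2 hp₁) _)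

lemma sum_bernoulliWeight (p : ℝ) (X : Finset α) :
    ∑ T ∈ X.powerset, bernoulliWeight p X T = 1 := by
  simp [bernoulliWeight, sum_pow_mul_eq_add_pow]

lemma exists_subset_expectation_le {p : ℝ} (hp₀ : 0 ≤ p) (hp₁ : p ≤ 1) (X : Finset α)
    (g : Finset α → ℝ) :
    ∃ T ⊆ X, ∑ S ∈ X.powerset, bernoulliWeight p X S * g S ≤ g T := by
  obtain ⟨T, hT, hmax⟩ := exists_max_image X.powerset g (powerset_nonempty X)
  refine ⟨T, mem_powerset.1 hT, ?_⟩
  calc ∑ S ∈ X.powerset, bernoulliWeight p X S * g S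
      ≤ ∑ S ∈ X.powerset, bernoulliWeight p X S * g T :=
        sum_le_sum fun S hS =>
          mul_le_mul_of_nonneg_left (hmax S hS) (bernoulliWeight_nonneg hp₀ hp₁ X S)
    _ = g T := by rw [← sum_mul, sum_bernoulliWeight, one_mul]

lemma sum_bernoulliWeight_Icc [DecidableEq α] (p : ℝ) {A X : Finset α} (hA : A ⊆ X) :
    ∑ T ∈ Icc A X, bernoulliWeight p X T = p ^ #A := by
  have hdisj : ∀ T ∈ (X \ A).powerset, Disjoint A T := fun T hT =>
    disjoint_of_subset_right (mem_powerset.1 hT) disjoint_sdiff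
  have hinj : Set.InjOn (A ∪ ·) ((X \ A).powerset : Set (Finset α)) := fun S hS T hT h => by
    rw [← union_sdiff_cancel_left (hdisj S hS), ← union_sdiff_cancel_left (hdisj T hT)]
    exact congrArg (· \ A) h
  rw [Icc_eq_image_powerset hA, sum_image hinj]
  calc ∑ T ∈ (X \ A).powerset, bernoulliWeight p X (A ∪ T)
      = ∑ T ∈ (X \ A).powerset, p ^ #A * bernoulliWeight p (X \ A) T := by
        refine sum_congr rfl fun T hT => ?_
        rw [bernoulliWeight, bernoulliWeight, card_union_of_disjoint (hdisj T hT),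
          card_sdiff_of_subset hA, pow_add, mul_assoc, Nat.sub_sub]
    _ = p ^ #A := by rw [← mul_sum, sum_bernoulliWeight, mul_one]

lemma sum_bernoulliWeight_mul_card [DecidableEq α] (p : ℝ) {X : Finset α} {F : Finset (Finset α)}
    (hF : F ⊆ X.powerset) :
    ∑ T ∈ X.powerset, bernoulliWeight p X T * #{A ∈ F | A ⊆ T} = ∑ A ∈ F, p ^ #A := by
  calc ∑ T ∈ X.powerset, bernoulliWeight p X T * #{A ∈ F | A ⊆ T}
      = ∑ T ∈ X.powerset, ∑ A ∈ F with A ⊆ T, bernoulliWeight p X T := by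
        simp only [sum_const, nsmul_eq_mul, mul_comm]
    _ = ∑ A ∈ F, ∑ T ∈ Icc A X, bernoulliWeight p X T :=
        sum_comm' fun T A => by simp only [mem_powerset, mem_filter, mem_Icc]; tauto
    _ = ∑ A ∈ F, p ^ #A :=
        sum_congr rfl fun A hA => sum_bernoulliWeight_Icc p (mem_powerset.1 (hF hA))

lemma sum_bernoulliWeight_mul_card_self (p : ℝ) (X : Finset α) :
    ∑ T ∈ X.powerset, bernoulliWeight p X T * #T = p * #X := by
  have hcard : ∀ T ∈ X.powerset, #{A ∈ powersetCard 1 X | A ⊆ T} = #T := fun T hT => by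
    have : {A ∈ powersetCard 1 X | A ⊆ T} = powersetCard 1 T := by
      ext A
      have := mem_powerset.1 hT
      simp only [mem_filter, mem_powersetCard]
      exact ⟨fun h => ⟨h.2, h.1.2⟩, fun h => ⟨⟨h.1.trans this, h.2⟩, h.1⟩⟩
    rw [this, card_powersetCard, Nat.choose_one_right]
  calc ∑ T ∈ X.powerset, bernoulliWeight p X T * #T
      = ∑ T ∈ X.powerset, bernoulliWeight p X T * #{A ∈ powersetCard 1 X | A ⊆ T} :=
        sum_congr rfl fun T hT => by rw [hcard T hT]
    _ = ∑ A ∈ powersetCard 1 X, p ^ #A :=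
        sum_bernoulliWeight_mul_card p fun A hA => mem_powerset.2 (mem_powersetCard.1 hA).1
    _ = ∑ _ ∈ powersetCard 1 X, p := sum_congr rfl fun _ hA => by
        rw [(mem_powersetCard.1 hA).2, pow_one]
    _ = p * #X := by
        rw [sum_const, card_powersetCard, Nat.choose_one_right, nsmul_eq_mul, mul_comm]

lemma exists_subset_forall_not_subset [DecidableEq α] {F : Finset (Finset α)}
    (hF : ∀ A ∈ F, A.Nonempty) (T : Finset α) :
    ∃ I ⊆ T, (∀ A ∈ F, ¬ A ⊆ I) ∧ #T ≤ #I + #{A ∈ F | A ⊆ T} := by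
  obtain hα | hα := isEmpty_or_nonempty α
  · exact ⟨T, Subset.rfl, fun A hA => isEmptyElim (hF A hA).choose, Nat.le_add_right _ _⟩
  choose! a ha using hF
  refine ⟨T \ ({A ∈ F | A ⊆ T}).image a, sdiff_subset, fun A hA hAI => ?_, ?_⟩
  · have hAT : A ∈ {A ∈ F | A ⊆ T} := mem_filter.2 ⟨hA, hAI.trans sdiff_subset⟩
    exact (mem_sdiff.1 (hAI (ha A hA))).2 (mem_image_of_mem a hAT)
  · have hdel := le_card_sdiff (({A ∈ F | A ⊆ T}).image a) T
    have himage : #(({A ∈ F | A ⊆ T}).image a) ≤ #{A ∈ F | A ⊆ T} := card_image_le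
    omega

theorem exists_large_subset_forall_not_subset {p : ℝ} (hp₀ : 0 ≤ p) (hp₁ : p ≤ 1)
    {X : Finset α} {F : Finset (Finset α)} (hFX : F ⊆ X.powerset) (hF : ∀ A ∈ F, A.Nonempty) :
    ∃ I ⊆ X, (∀ A ∈ F, ¬ A ⊆ I) ∧ p * #X ≤ #I + ∑ A ∈ F, p ^ #A := by
  obtain ⟨T, hTX, hT⟩ :=
    exists_subset_expectation_le hp₀ hp₁ X fun S => (#S : ℝ) - #{A ∈ F | A ⊆ S}
  simp only [mul_sub, sum_sub_distrib, sum_bernoulliWeight_mul_card_self,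
    sum_bernoulliWeight_mul_card p hFX] at hT
  obtain ⟨I, hIT, hI, hcard⟩ := exists_subset_forall_not_subset hF T
  have hcard' : (#T : ℝ) ≤ #I + #{A ∈ F | A ⊆ T} := mod_cast hcard
  exact ⟨I, hIT.trans hTX, hI, by linarith⟩

end DeletionMethod

section Binomial

lemma choose_le_mul_of_choose_le_add {r x y d : ℕ} (hxy : x < y)
    (h : y.choose (r + 1) ≤ x.choose (r + 1) + d) : x.choose (r + 1) ≤ x * d := by
  have hstep : x.choose (r + 1) * (x + 1) ≤ (x + 1).choose (r + 1) * x := by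
    rw [Nat.choose_mul_succ_eq]
    exact Nat.mul_le_mul_left _ (by omega)
  have hmono : (x + 1).choose (r + 1) ≤ x.choose (r + 1) + d :=
    (Nat.choose_le_choose _ hxy).trans h
  nlinarith

lemma subsingleton_choose_mem_Icc (r : ℕ) {m a w : ℕ} (h : m * w < a) :
    {x | x ≤ m ∧ x.choose (r + 1) ∈ Set.Icc a (a + w)}.Subsingleton := by
  have hnot : ∀ {x y : ℕ}, x ≤ m → a ≤ x.choose (r + 1) → y.choose (r + 1) ≤ a + w → ¬ x < y := by
    intro x y hx hax hya hxy
    have hgap := choose_le_mul_of_choose_le_add hxy (hya.trans (Nat.add_le_add_right hax w))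
    have := Nat.mul_le_mul_right w hx
    omega
  rintro x ⟨hx, hx₁, hx₂⟩ y ⟨hy, hy₁, hy₂⟩
  exact le_antisymm (not_lt.1 (hnot hy hy₁ hx₂)) (not_lt.1 (hnot hx hx₁ hy₂))

lemma choose_add_le_choose_add_mul (k v r : ℕ) :
    (k + v).choose (r + 1) ≤ k.choose (r + 1) + v * (k + v - 1).choose r := by
  induction v with
  | zero => simp
  | succ v ih =>
    have hmono : (k + v - 1).choose r ≤ (k + v).choose r := Nat.choose_le_choose r (by omega)
    calc (k + v + 1).choose (r + 1)
        = (k + v).choose r + (k + v).choose (r + 1) := Nat.choose_succ_succ' _ _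
      _ ≤ (k + v).choose r + (k.choose (r + 1) + v * (k + v).choose r) := by
        gcongr
        exact ih.trans (by gcongr)
      _ = k.choose (r + 1) + (v + 1) * (k + v + 1 - 1).choose r := by
        rw [Nat.add_sub_cancel]
        ring

lemma add_le_mul_of_two_mul_choose_le {k v r : ℕ} (hr : r < k + v)
    (h : 2 * k.choose (r + 1) ≤ (k + v).choose (r + 1)) : k + v ≤ 2 * (r + 1) * v := by
  have hpos : 0 < (k + v - 1).choose r := Nat.choose_pos (by omega)
  have habsorb : (k + v) * (k + v - 1).choose r = (k + v).choose (r + 1) * (r + 1) := by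
    obtain ⟨n, hn⟩ := Nat.exists_eq_add_of_lt hr
    rw [hn, Nat.add_sub_cancel, Nat.add_one_mul_choose_eq]
  have hhalf : (k + v).choose (r + 1) ≤ 2 * (v * (k + v - 1).choose r) := by
    have := choose_add_le_choose_add_mul k v r
    omega
  refine Nat.le_of_mul_le_mul_right (c := (k + v - 1).choose r) ?_ hpos
  calc (k + v) * (k + v - 1).choose r = (k + v).choose (r + 1) * (r + 1) := habsorb
    _ ≤ 2 * (v * (k + v - 1).choose r) * (r + 1) := Nat.mul_le_mul_right _ hhalf
    _ = 2 * (r + 1) * v * (k + v - 1).choose r := by ring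

lemma eventually_pow_le_mul_choose (r : ℕ) :
    ∃ c > (0 : ℝ), ∀ᶠ n : ℕ in atTop, (n : ℝ) ^ r ≤ c * n.choose r := by
  obtain ⟨c, hc, h⟩ := (isTheta_choose r).2.exists_pos
  refine ⟨c, hc, h.bound.mono fun n hn => ?_⟩
  simpa using hn

lemma eventually_mul_pow_lt_choose (c : ℕ) {k r : ℕ} (hkr : k < r) :
    ∀ᶠ n : ℕ in atTop, c * n ^ k < n.choose r := by
  obtain ⟨d, hd, h⟩ := eventually_pow_le_mul_choose r
  filter_upwards [h, eventually_gt_atTop 0, tendsto_natCast_atTop_atTop.eventually_gt_atTop (d * c)]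
    with n hn hpos hlarge
  have hpow : (n : ℝ) * n ^ k ≤ n ^ r := by
    rw [← pow_succ']
    exact pow_le_pow_right₀ (mod_cast hpos) hkr
  have hnk : (0 : ℝ) < n ^ k := by positivity
  have : d * (c * (n : ℝ) ^ k) < d * n.choose r :=
    calc d * (c * (n : ℝ) ^ k) = d * c * n ^ k := by ring
      _ < n * n ^ k := mul_lt_mul_of_pos_right hlarge hnk
      _ ≤ d * n.choose r := hpow.trans hn
  exact_mod_cast lt_of_mul_lt_mul_left this hd.le

lemma exists_choose_le_lt_choose_add_one (r e : ℕ) :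
    ∃ k, k.choose (r + 1) ≤ e ∧ e < (k + 1).choose (r + 1) := by
  have hex : ∃ n : ℕ, e < n.choose (r + 1) := by
    simpa using (eventually_mul_pow_lt_choose e r.succ_pos).exists
  obtain ⟨k, hk⟩ : ∃ k, Nat.find hex = k + 1 :=
    Nat.exists_eq_add_one_of_ne_zero fun h => by simpa [h] using Nat.find_spec hex
  exact ⟨k, not_lt.1 (Nat.find_min hex (by omega)), hk ▸ Nat.find_spec hex⟩

lemma eventually_exists_deletion_probability (r m C : ℕ) (D : ℝ) :
    ∀ᶠ n : ℕ in atTop, ∃ p : ℝ, 0 ≤ p ∧ p ≤ 1 ∧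
      C * (n : ℝ) ^ r + p ^ (m + 1) * (n ^ m * D) ≤ p * n.choose (r + 1) := by
  obtain ⟨c, hc, h⟩ := eventually_pow_le_mul_choose (r + 1)
  have hlarge (x : ℝ) : ∀ᶠ n : ℕ in atTop, x ≤ n :=
    tendsto_natCast_atTop_atTop.eventually_ge_atTop x
  set K : ℝ := c * (C + 1) with hK
  filter_upwards [h, hlarge 1, hlarge K, hlarge (K ^ (m + 1) * D)] with n hn hn₁ hnK hnD
  have hn₀ : (0 : ℝ) < n := by linarith
  -- With `p = K / n` the second summand is `O(1 / n)`, while the right-hand side is at least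
  -- `(K / c) * n ^ r`.
  refine ⟨K / n, by positivity, div_le_one_of_le₀ hnK hn₀.le, ?_⟩
  have hdeleted : (K / n) ^ (m + 1) * (n ^ m * D) ≤ 1 := by
    have hcancel : (K / n) ^ (m + 1) * (n ^ m * D) = K ^ (m + 1) * D / n := by
      rw [div_pow, pow_succ (n : ℝ)]
      field_simp
    rw [hcancel]
    exact div_le_one_of_le₀ hnD hn₀.le
  have hchosen : (C + 1) * (n : ℝ) ^ r ≤ K / n * n.choose (r + 1) := by
    calc (C + 1) * (n : ℝ) ^ r = (C + 1) / n * n ^ (r + 1) := by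
          rw [pow_succ]
          field_simp
      _ ≤ (C + 1) / n * (c * n.choose (r + 1)) := by gcongr
      _ = K / n * n.choose (r + 1) := by rw [hK]; ring
  linarith [one_le_pow₀ hn₁ (n := r)]

end Binomial

section Sparse

variable {V : Type*} [DecidableEq V]

/-- Every `m` vertices span at most `m` edges. These are the hypergraphs without the
Brown–Erdős–Sós configurations of `m + 1` edges on `m` vertices. -/
def IsSparse (m : ℕ) (J : Finset (Finset V)) : Prop :=
  ∀ S : Finset V, #S = m → #{t ∈ J | t ⊆ S} ≤ m

/-- The sets of `m + 1` many `r`-subsets of `U` that lie in a common `m`-subset of `U`. -/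
def denseConfigurations (r m : ℕ) (U : Finset V) : Finset (Finset (Finset V)) :=
  (powersetCard m U).biUnion fun S => powersetCard (m + 1) (powersetCard r S)

lemma card_of_mem_denseConfigurations {r m : ℕ} {U : Finset V} {A : Finset (Finset V)}
    (hA : A ∈ denseConfigurations r m U) : #A = m + 1 := by
  obtain ⟨S, -, hAS⟩ := mem_biUnion.1 hA
  exact (mem_powersetCard.1 hAS).2

lemma denseConfigurations_subset (r m : ℕ) (U : Finset V) :
    denseConfigurations r m U ⊆ (powersetCard r U).powerset := by
  refine biUnion_subset.2 fun S hS A hA => mem_powerset.2 ?_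
  exact (mem_powersetCard.1 hA).1.trans (powersetCard_mono (mem_powersetCard.1 hS).1)

lemma card_denseConfigurations_le (r m : ℕ) (U : Finset V) :
    #(denseConfigurations r m U) ≤ #U ^ m * (m.choose r).choose (m + 1) := by
  calc #(denseConfigurations r m U)
      ≤ #(powersetCard m U) * (m.choose r).choose (m + 1) :=
        card_biUnion_le_card_mul _ _ _ fun S hS => by
          rw [card_powersetCard, card_powersetCard, (mem_powersetCard.1 hS).2]
    _ ≤ #U ^ m * (m.choose r).choose (m + 1) := by
        rw [card_powersetCard]
        exact Nat.mul_le_mul_right _ (Nat.choose_le_pow _ _)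

lemma isSparse_of_forall_not_subset {r m : ℕ} {U : Finset V} (hm : m ≤ #U)
    {J : Finset (Finset V)} (hJ : J ⊆ powersetCard r U)
    (h : ∀ A ∈ denseConfigurations r m U, ¬ A ⊆ J) : IsSparse m J := by
  intro S hS
  by_contra! hlt
  obtain ⟨A, hAJ, hA⟩ := exists_subset_card_eq (Nat.succ_le_of_lt hlt)
  obtain ⟨S', hSS', hS'U, hS'⟩ := exists_subsuperset_card_eq (inter_subset_right (s₁ := S))
    ((card_le_card inter_subset_left).trans_eq hS) hm
  refine h A ?_ (hAJ.trans (filter_subset _ _))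
  refine mem_biUnion.2 ⟨S', mem_powersetCard.2 ⟨hS'U, hS'⟩, mem_powersetCard.2 ⟨?_, hA⟩⟩
  intro t ht
  obtain ⟨htJ, htS⟩ := mem_filter.1 (hAJ ht)
  obtain ⟨htU, htcard⟩ := mem_powersetCard.1 (hJ htJ)
  exact mem_powersetCard.2 ⟨(subset_inter htS htU).trans hSS', htcard⟩

lemma IsSparse.mono {m : ℕ} {I J : Finset (Finset V)} (hJ : IsSparse m J) (hIJ : I ⊆ J) :
    IsSparse m I :=
  fun S hS => (card_le_card (filter_subset_filter _ hIJ)).trans (hJ S hS)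

lemma exists_isSparse_mul_choose_le (r : ℕ) {m : ℕ} {U : Finset V} (hm : m ≤ #U) {p : ℝ}
    (hp₀ : 0 ≤ p) (hp₁ : p ≤ 1) :
    ∃ J ⊆ powersetCard r U, IsSparse m J ∧
      p * (#U).choose r ≤ #J + p ^ (m + 1) * (#U ^ m * (m.choose r).choose (m + 1)) := by
  obtain ⟨J, hJU, hJ, hcard⟩ := exists_large_subset_forall_not_subset hp₀ hp₁
    (denseConfigurations_subset r m U) fun A hA =>
      card_pos.1 (by rw [card_of_mem_denseConfigurations hA]; exact m.succ_pos)
  refine ⟨J, hJU, isSparse_of_forall_not_subset hm hJU hJ, ?_⟩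
  have hconfig : ∑ A ∈ denseConfigurations r m U, p ^ #A =
      p ^ (m + 1) * #(denseConfigurations r m U) := by
    rw [sum_congr rfl fun A hA => by rw [card_of_mem_denseConfigurations hA], sum_const,
      nsmul_eq_mul, mul_comm]
  have hconfig_card :
      (#(denseConfigurations r m U) : ℝ) ≤ #U ^ m * (m.choose r).choose (m + 1) :=
    mod_cast card_denseConfigurations_le r m U
  calc p * (#U).choose r = p * #(powersetCard r U) := by rw [card_powersetCard]
    _ ≤ #J + p ^ (m + 1) * #(denseConfigurations r m U) := hconfig ▸ hcard
    _ ≤ #J + p ^ (m + 1) * (#U ^ m * (m.choose r).choose (m + 1)) := by gcongr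

theorem eventually_exists_isSparse (r m C : ℕ) :
    ∀ᶠ n : ℕ in atTop, ∀ {V : Type*} [DecidableEq V] (U : Finset V), #U = n →
      ∃ J ⊆ powersetCard (r + 1) U, IsSparse m J ∧ C * n ^ r ≤ #J := by
  filter_upwards [eventually_ge_atTop m,
    eventually_exists_deletion_probability r m C ((m.choose (r + 1)).choose (m + 1))]
    with n hmn ⟨p, hp₀, hp₁, hp⟩
  rintro V _ U rfl
  obtain ⟨J, hJU, hJ, hcard⟩ := exists_isSparse_mul_choose_le (r + 1) hmn hp₀ hp₁
  have : (C : ℝ) * #U ^ r ≤ #J := by linarith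
  exact ⟨J, hJU, hJ, mod_cast this⟩

end Sparse

section CliqueUnionSparse

variable {V : Type*}

/-- `f` lies in one of the windows `[C(x,r), C(x,r) + m]` with `x ≤ m`, which contain the numbers of
edges that `m` vertices can span in the disjoint union of a clique and a sparse hypergraph. -/
def IsNearCliqueCount (r m f : ℕ) : Prop :=
  ∃ x ≤ m, f ∈ Set.Icc (x.choose r) (x.choose r + m)

lemma disjoint_powersetCard_add_one (r : ℕ) {K U : Finset V} (h : Disjoint K U) :
    Disjoint (powersetCard (r + 1) K) (powersetCard (r + 1) U) := by
  refine disjoint_left.2 fun t htK htU => ?_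
  obtain ⟨htK, ht⟩ := mem_powersetCard.1 htK
  have hempty : t = ∅ := disjoint_self.1 (h.mono htK (mem_powersetCard.1 htU).1)
  simp [hempty] at ht

variable [DecidableEq V]

lemma filter_subset_powersetCard (r : ℕ) (K S : Finset V) :
    {t ∈ powersetCard r K | t ⊆ S} = powersetCard r (K ∩ S) := by
  ext t
  simp only [mem_filter, mem_powersetCard, subset_inter_iff]
  tauto

lemma isNearCliqueCount_clique_union {r m : ℕ} {K U S : Finset V} {J : Finset (Finset V)}
    (hKU : Disjoint K U) (hJU : J ⊆ powersetCard (r + 1) U) (hJ : IsSparse m J) (hS : #S = m) :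
    IsNearCliqueCount (r + 1) m #{t ∈ powersetCard (r + 1) K ∪ J | t ⊆ S} := by
  have hdisj := (disjoint_powersetCard_add_one r hKU).mono_right hJU
  have hcard : #{t ∈ powersetCard (r + 1) K ∪ J | t ⊆ S} =
      (#(K ∩ S)).choose (r + 1) + #{t ∈ J | t ⊆ S} := by
    rw [filter_union, card_union_of_disjoint (disjoint_filter_filter hdisj),
      filter_subset_powersetCard, card_powersetCard]
  refine ⟨#(K ∩ S), hS ▸ card_le_card inter_subset_right, ?_⟩
  rw [hcard]
  exact ⟨Nat.le_add_right _ _, Nat.add_le_add_left (hJ S hS) _⟩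

lemma exists_card_eq_isNearCliqueCount {r m e : ℕ} {K U : Finset V} (hKU : Disjoint K U)
    {J : Finset (Finset V)} (hJU : J ⊆ powersetCard (r + 1) U) (hJ : IsSparse m J)
    (hle : (#K).choose (r + 1) ≤ e) (hge : e ≤ (#K).choose (r + 1) + #J) :
    ∃ G ⊆ powersetCard (r + 1) (K ∪ U), #G = e ∧
      ∀ S, #S = m → IsNearCliqueCount (r + 1) m #{t ∈ G | t ⊆ S} := by
  obtain ⟨I, hIJ, hI⟩ := exists_subset_card_eq (Nat.sub_le_iff_le_add'.2 hge)
  have hIU := hIJ.trans hJU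
  refine ⟨powersetCard (r + 1) K ∪ I, ?_, ?_,
    fun S hS => isNearCliqueCount_clique_union hKU hIU (hJ.mono hIJ) hS⟩
  · exact union_subset (powersetCard_mono subset_union_left)
      (hIU.trans (powersetCard_mono subset_union_right))
  · rw [card_union_of_disjoint ((disjoint_powersetCard_add_one r hKU).mono_right hIU),
      card_powersetCard, hI, Nat.add_sub_cancel' hle]

lemma exists_clique_order {n r e : ℕ} (hr : r < n) (he : 2 * e ≤ n.choose (r + 1)) :
    ∃ k v, k + v = n ∧ n ≤ 2 * (r + 1) * v ∧ k.choose (r + 1) ≤ e ∧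
      e ≤ k.choose (r + 1) + (2 * (r + 1)) ^ r * v ^ r := by
  obtain ⟨k, hk, hk'⟩ := exists_choose_le_lt_choose_add_one r e
  have hkn : k ≤ n := by
    by_contra! hnk
    have hmono := Nat.choose_le_choose (r + 1) hnk.le
    have hpos : 0 < n.choose (r + 1) := Nat.choose_pos hr
    omega
  obtain ⟨v, rfl⟩ := Nat.exists_eq_add_of_le hkn
  have hv : k + v ≤ 2 * (r + 1) * v := add_le_mul_of_two_mul_choose_le hr (by omega)
  have hrest : k.choose r ≤ (2 * (r + 1)) ^ r * v ^ r :=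
    calc k.choose r ≤ k ^ r := Nat.choose_le_pow k r
      _ ≤ (2 * (r + 1) * v) ^ r := Nat.pow_le_pow_left (by omega) r
      _ = (2 * (r + 1)) ^ r * v ^ r := mul_pow _ _ _
  rw [Nat.choose_succ_succ'] at hk'
  exact ⟨k, v, rfl, hv, hk, by omega⟩

theorem eventually_exists_isNearCliqueCount (r m : ℕ) :
    ∀ᶠ n : ℕ in atTop, ∀ e, 2 * e ≤ n.choose (r + 1) →
      ∃ G ⊆ powersetCard (r + 1) (univ : Finset (Fin n)), #G = e ∧
        ∀ S, #S = m → IsNearCliqueCount (r + 1) m #{t ∈ G | t ⊆ S} := by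
  obtain ⟨v₀, hv₀⟩ := eventually_atTop.1 (eventually_exists_isSparse r m ((2 * (r + 1)) ^ r))
  filter_upwards [eventually_gt_atTop r, eventually_ge_atTop (2 * (r + 1) * v₀)]
    with n hrn hn e he
  obtain ⟨k, v, hkv, hnv, hle, hge⟩ := exists_clique_order hrn he
  obtain ⟨K, -, hK⟩ : ∃ K ⊆ (univ : Finset (Fin n)), #K = k :=
    exists_subset_card_eq (by rw [card_fin]; omega)
  have hKv : #Kᶜ = v := by rw [card_compl, Fintype.card_fin, hK]; omega
  have hv : v₀ ≤ v := Nat.le_of_mul_le_mul_left (hn.trans hnv) (by omega)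
  obtain ⟨J, hJU, hJ, hJcard⟩ := hv₀ v hv Kᶜ hKv
  subst hK
  rw [← union_compl K]
  exact exists_card_eq_isNearCliqueCount disjoint_compl_right hJU hJ hle (by omega)

end CliqueUnionSparse

section Avoidability

lemma card_filter_subset_sdiff_add {V : Type*} [DecidableEq V] {r : ℕ} {U : Finset V}
    {G : Finset (Finset V)} (hG : G ⊆ powersetCard r U) (S : Finset V) :
    #{t ∈ powersetCard r U \ G | t ⊆ S} + #{t ∈ G | t ⊆ S} = (#(U ∩ S)).choose r := by
  have hsub : {t ∈ G | t ⊆ S} ⊆ {t ∈ powersetCard r U | t ⊆ S} := filter_subset_filter _ hG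
  have hsdiff : {t ∈ powersetCard r U \ G | t ⊆ S} =
      {t ∈ powersetCard r U | t ⊆ S} \ {t ∈ G | t ⊆ S} := by
    ext t
    simp only [mem_filter, Finset.mem_sdiff]
    tauto
  rw [hsdiff, card_sdiff_add_card_eq_card hsub, filter_subset_powersetCard, card_powersetCard]

theorem absolutelyAvoidable_of_not_isNearCliqueCount {r m f : ℕ}
    (hf : ¬ IsNearCliqueCount (r + 1) m f)
    (hf' : ¬ IsNearCliqueCount (r + 1) m (m.choose (r + 1) - f)) :
    AbsolutelyAvoidable (r + 1) m f := by
  obtain ⟨n₀, hn₀⟩ := eventually_atTop.1 (eventually_exists_isNearCliqueCount r m)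
  refine ⟨n₀, fun n hn e he => ?_⟩
  obtain hsmall | hlarge := le_total (2 * e) (n.choose (r + 1))
  · obtain ⟨G, hG, hGe, hcount⟩ := hn₀ n hn.le e hsmall
    refine ⟨G, subset_powersetCard_univ_iff.1 hG, hGe, ?_⟩
    rintro ⟨S, hS, rfl⟩
    exact hf (hcount S hS)
  · obtain ⟨G, hG, hGe, hcount⟩ := hn₀ n hn.le (n.choose (r + 1) - e) (by omega)
    refine ⟨powersetCard (r + 1) univ \ G, subset_powersetCard_univ_iff.1 sdiff_subset, ?_, ?_⟩
    · rw [card_sdiff_of_subset hG, card_powersetCard, card_fin, hGe, Nat.sub_sub_self he]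
    · rintro ⟨S, hS, rfl⟩
      have hcompl := card_filter_subset_sdiff_add hG S
      rw [univ_inter, hS] at hcompl
      rw [← hcompl, Nat.add_sub_cancel_left] at hf'
      exact hf' (hcount S hS)

lemma exists_mem_Icc_choose_of_not_absolutelyAvoidable {r m f : ℕ}
    (h : ¬ AbsolutelyAvoidable (r + 1) m f) :
    ∃ x ≤ m, f ∈ Set.Icc (x.choose (r + 1)) (x.choose (r + 1) + m) ∨
      m.choose (r + 1) - f ∈ Set.Icc (x.choose (r + 1)) (x.choose (r + 1) + m) := by
  by_contra! hnot
  exact h (absolutelyAvoidable_of_not_isNearCliqueCount (fun ⟨x, hx, hxf⟩ => (hnot x hx).1 hxf)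
    fun ⟨x, hx, hxf⟩ => (hnot x hx).2 hxf)

end Avoidability

/-- For every `r ≥ 3` and all sufficiently large `m`, either `(m, ⌊C(m,r)/2⌋)` or
`(m, ⌊C(m,r)/2⌋ - m - 1)` is absolutely `r`-avoidable. -/
theorem main_absolutely_avoidable (r : ℕ) (hr : 3 ≤ r) :
    ∃ m₀ : ℕ, ∀ m ≥ m₀,
      AbsolutelyAvoidable r m (m.choose r / 2) ∨
      AbsolutelyAvoidable r m (m.choose r / 2 - m - 1) := by
  obtain ⟨r, rfl⟩ := Nat.exists_eq_add_of_le' (show 1 ≤ r by omega)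
  refine Eventually.exists_forall_of_atTop ?_
  filter_upwards [eventually_mul_pow_lt_choose 20 hr, eventually_ge_atTop 1] with m hm hm₁
  have hgap : m * (3 * m + 3) < m.choose (r + 1) / 2 - (2 * m + 1) := by
    have hsq : m ≤ m ^ 2 := Nat.le_self_pow two_ne_zero m
    have hexpand : m * (3 * m + 3) = 3 * m ^ 2 + 3 * m := by ring
    omega
  by_contra! h
  obtain ⟨x, hx, hxf⟩ := exists_mem_Icc_choose_of_not_absolutelyAvoidable h.1
  obtain ⟨y, hy, hyf⟩ := exists_mem_Icc_choose_of_not_absolutelyAvoidable h.2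
  simp only [Set.mem_Icc] at hxf hyf
  have hxy : x = y := subsingleton_choose_mem_Icc r hgap
    ⟨hx, by omega, by omega⟩ ⟨hy, by omega, by omega⟩
  subst hxy
  omega
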